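/- The L²(π)-normalized eigenvectors satisfy ζ_i(1) · ζ_i(n) = − ∏_{j=1, j≠i}^{n−1} λ^G_j/(λ^G_j − λ^G_i) for every 1 ≤ i ≤ n−1. -/

import Mathlib

open Finset

/-- Dirichlet form on the path with vertices `{1,…,n}`;
`ν i` denotes the weight of edge `{i, i+1}`. -/
noncomputable def EForm (n : ℕ) (ν : ℕ → ℝ) (f g : ℕ → ℝ) : ℝ :=
  ∑ i ∈ Finset.Icc 1 (n - 1), (f i - f (i + 1)) * (g i - g (i + 1)) * ν i

/-- Mean of `f` with respect to `π` on `{1,…,n}`. -/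
noncomputable def piMean (n : ℕ) (π : ℕ → ℝ) (f : ℕ → ℝ) : ℝ :=
  ∑ i ∈ Finset.Icc 1 n, f i * π i

/-- Variance of `f` with respect to `π` on `{1,…,n}`. -/
noncomputable def varPi (n : ℕ) (π : ℕ → ℝ) (f : ℕ → ℝ) : ℝ :=
  piMean n π (fun i => (f i) ^ 2) - (piMean n π f) ^ 2

/-- `f` is non-constant on `{1,…,n}`. -/
def Nonconstant (n : ℕ) (f : ℕ → ℝ) : Prop :=
  ∃ i ∈ Finset.Icc 1 n, ∃ j ∈ Finset.Icc 1 n, f i ≠ f j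

/-- `lam` is the spectral gap: the minimum of the Rayleigh quotients over
non-constant functions. -/
def IsSpectralGap (n : ℕ) (π ν : ℕ → ℝ) (lam : ℝ) : Prop :=
  IsLeast {r : ℝ | ∃ f : ℕ → ℝ, Nonconstant n f ∧ r = EForm n ν f f / varPi n π f} lam

/-- The positive-part recursion with parameter `lam`:
`ψ(i+1) = ψ(i) + max{[ψ(i)−ψ(i−1)]ν(i−1,i) − λ π(i) ψ(i), 0}/ν(i,i+1)` for `1 ≤ i < n`. -/
def PosPartRec (n : ℕ) (π ν : ℕ → ℝ) (lam : ℝ) (ψ : ℕ → ℝ) : Prop :=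
  ∀ i, 1 ≤ i → i < n →
    ψ (i + 1) = ψ i + max ((ψ i - ψ (i - 1)) * ν (i - 1) - lam * (π i * ψ i)) 0 / ν i
/-- `ζ` is an eigenvector of `M^G_{π,ν}` with eigenvalue `lam`, expressed through the
Euler–Lagrange equations (recall the conventions `ν 0 = 0`, `ν n = 0`). -/
def IsEigen (n : ℕ) (π ν : ℕ → ℝ) (lam : ℝ) (ζ : ℕ → ℝ) : Prop :=
  (∃ k ∈ Finset.Icc 1 n, ζ k ≠ 0) ∧
  ∀ k ∈ Finset.Icc 1 n,
    lam * (π k * ζ k) = (ζ k - ζ (k - 1)) * ν (k - 1) + (ζ k - ζ (k + 1)) * ν k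

/-- `ξ` is the function `ξ_λ`: `ξ(1) = −1` and
`ξ(k+1) = ξ(k) + ([ξ(k)−ξ(k−1)] ν(k−1,k) − λ π(k) ξ(k))/ν(k,k+1)` for `1 ≤ k < n`. -/
def XiRec (n : ℕ) (π ν : ℕ → ℝ) (lam : ℝ) (ξ : ℕ → ℝ) : Prop :=
  ξ 1 = -1 ∧ ∀ k, 1 ≤ k → k < n →
    ξ (k + 1) = ξ k + ((ξ k - ξ (k - 1)) * ν (k - 1) - lam * (π k * ξ k)) / ν k

/-- `f` is of type `i` on `{1,…,n}` with peak-valley points `a 1 < b 1 ≤ a 2 < b 2 ≤ ⋯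
≤ a i < b i ≤ n`. -/
def IsTypeWith (n : ℕ) (f : ℕ → ℝ) (i : ℕ) (a b : ℕ → ℕ) : Prop :=
  a 1 = 1 ∧ b i ≤ n ∧
  (∀ j, 1 ≤ j → j ≤ i → a j < b j) ∧
  (∀ j, 1 ≤ j → j < i → b j ≤ a (j + 1) ∧ a (j + 1) ≤ b j + 1) ∧
  (∀ j, 1 ≤ j → j ≤ i →
    StrictMonoOn f (Set.Icc (a j) (b j)) ∨ StrictAntiOn f (Set.Icc (a j) (b j))) ∧
  (∀ j, 1 ≤ j → j < i →
    (f (a j) - f (a j + 1)) * (f (a (j + 1)) - f (a (j + 1) + 1)) < 0) ∧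
  (∀ j, 1 ≤ j → j < i → f (a (j + 1)) = f (b j)) ∧
  (∀ k, b i ≤ k → k ≤ n → f k = f (b i))

/-- `f` is of type `i` on `{1,…,n}`. -/
def IsType (n : ℕ) (f : ℕ → ℝ) (i : ℕ) : Prop :=
  ∃ a b : ℕ → ℕ, IsTypeWith n f i a b

/-!
Solving the eigenvalue equation `M ζ = λ ζ` from the left end gives `ζ k = ζ 1 * p k (λ)` and
`∑ l ≤ k, π l * ζ l = ζ 1 * S k (λ)`, where `p k` and `S k` are polynomials in `λ`; summing the
equation over all vertices gives `λ * S n (λ) = 0`. Hence `S n`, of degree at most `n - 1`, vanishes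
at the `n - 1` nonzero eigenvalues and takes the value `∑ π` at `0`, which determines it.
The Wronskian of `p k` and `X * S k` telescopes to `∑ l ≤ k, π l * p l ^ 2` (the confluent
Christoffel–Darboux formula). At a nonzero eigenvalue `λ` and `k = n` it reduces to
`p n (λ) * λ * S n' (λ)`, so the squared norm of `ζ` is `ζ 1 * ζ n * λ * S n' (λ)`, and the
factorization of `S n` evaluates `S n' (λ)`.
-/

open Polynomial

lemma eq_C_mul_nodal {R ι : Type*} [CommRing R] [IsDomain R] {s : Finset ι} {v : ι → R}
    {P : R[X]} (hv : Set.InjOn v s) (hdeg : P.natDegree ≤ #s)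
    (hroot : ∀ j ∈ s, P.eval (v j) = 0) :
    P = C (P.coeff #s) * Lagrange.nodal s v := by
  refine eq_of_degree_sub_lt_of_eval_index_eq s hv ?_ fun j hj ↦ ?_
  · rw [degree_lt_iff_coeff_zero]
    intro d hd
    rcases hd.eq_or_lt with rfl | hlt
    · have hlead : (Lagrange.nodal s v).coeff #s = 1 := by
        simpa only [Monic, leadingCoeff, Lagrange.natDegree_nodal] using
          Lagrange.nodal_monic (s := s) (v := v)
      rw [coeff_sub, coeff_C_mul, hlead, mul_one, sub_self]
    · have hnodal : (Lagrange.nodal s v).natDegree < d := by rwa [Lagrange.natDegree_nodal]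
      rw [coeff_sub, coeff_C_mul, coeff_eq_zero_of_natDegree_lt (hdeg.trans_lt hlt),
        coeff_eq_zero_of_natDegree_lt hnodal, mul_zero, sub_self]
  · rw [hroot j hj, eval_mul, Lagrange.eval_nodal_at_node hj, mul_zero]

lemma eval_eq_eval_derivative_mul_prod_div {K ι : Type*} [Field K] [DecidableEq ι]
    {s : Finset ι} {v : ι → K} {P : K[X]} (hv : Set.InjOn v s) (hdeg : P.natDegree ≤ #s)
    (hroot : ∀ j ∈ s, P.eval (v j) = 0) {i : ι} (hi : i ∈ s) (x : K) :
    P.eval x = P.derivative.eval (v i) * (x - v i) *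
      ∏ j ∈ s.erase i, (x - v j) / (v i - v j) := by
  have hne : ∏ j ∈ s.erase i, (v i - v j) ≠ 0 := prod_ne_zero_iff.mpr fun j hj ↦
    sub_ne_zero.mpr fun h ↦ ne_of_mem_erase hj (hv hi (mem_of_mem_erase hj) h).symm
  rw [eq_C_mul_nodal hv hdeg hroot, derivative_C_mul, eval_C_mul, eval_C_mul,
    Lagrange.eval_nodal_derivative_eval_node_eq hi, Lagrange.eval_nodal, Lagrange.eval_nodal,
    ← mul_prod_erase s _ hi, prod_div_distrib]
  field_simp

section PathPolynomials

variable {R : Type*} [CommRing R] (π r : ℕ → R)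

mutual

/-- The solution on the path, normalized to `1` at vertex `1`, of the eigenvalue equation with
spectral parameter `X`, vertex weights `π` and resistances `r k = 1 / ν k`. The value at `0` is a
convention. -/
noncomputable def eigenPoly : ℕ → R[X]
  | 0 => 1
  | k + 1 => eigenPoly k - C (r k) * (X * massPoly k)
termination_by k => (k, 0)

/-- The partial sum `∑ l ∈ Icc 1 k, π l * eigenPoly l` of the normalized solution; the flow through
the edge `{k, k + 1}` is `X` times this sum. -/
noncomputable def massPoly : ℕ → R[X]
  | 0 => 0
  | k + 1 => massPoly k + C (π (k + 1)) * eigenPoly (k + 1)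
termination_by k => (k, 1)

end

@[simp]
lemma eigenPoly_one : eigenPoly π r 1 = 1 := by
  simp [eigenPoly, massPoly]

lemma natDegree_eigenPoly_le_and_natDegree_massPoly_le (k : ℕ) :
    (eigenPoly π r k).natDegree ≤ k - 1 ∧ (massPoly π r k).natDegree ≤ k - 1 := by
  induction k with
  | zero => simp [eigenPoly, massPoly]
  | succ k ih =>
    have heigen : (eigenPoly π r (k + 1)).natDegree ≤ k := by
      rcases k.eq_zero_or_pos with rfl | hk
      · simp
      · have hX : (X * massPoly π r k).natDegree ≤ k :=
          (natDegree_mul_le_of_le natDegree_X_le ih.2).trans (by lia)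
        rw [eigenPoly]
        exact natDegree_sub_le_of_le (ih.1.trans (k.sub_le 1))
          ((natDegree_C_mul_le _ _).trans hX) |>.trans (max_self k).le
    refine ⟨heigen, ?_⟩
    rw [massPoly]
    exact natDegree_add_le_of_degree_le (ih.2.trans (k.sub_le 1))
      ((natDegree_C_mul_le _ _).trans heigen)

lemma eval_zero_eigenPoly (k : ℕ) : (eigenPoly π r k).eval 0 = 1 := by
  induction k with
  | zero => simp [eigenPoly]
  | succ k ih => simp [eigenPoly, ih]

lemma eval_zero_massPoly (k : ℕ) : (massPoly π r k).eval 0 = ∑ l ∈ Icc 1 k, π l := by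
  induction k with
  | zero => simp [massPoly]
  | succ k ih =>
    rw [massPoly, sum_Icc_succ_top (by lia), ← ih, eval_add, eval_C_mul, eval_zero_eigenPoly,
      mul_one]

lemma wronskian_eigenPoly_X_mul_massPoly (k : ℕ) :
    wronskian (eigenPoly π r k) (X * massPoly π r k) =
      ∑ l ∈ Icc 1 k, C (π l) * eigenPoly π r l ^ 2 := by
  induction k with
  | zero => simp [massPoly]
  | succ k ih =>
    have hstep : wronskian (eigenPoly π r (k + 1)) (X * massPoly π r k) =
        wronskian (eigenPoly π r k) (X * massPoly π r k) := by
      simp only [eigenPoly, wronskian, derivative_sub, derivative_C_mul]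
      ring
    rw [sum_Icc_succ_top (by lia), ← ih, ← hstep, massPoly]
    simp only [wronskian, derivative_mul, derivative_add, derivative_C, derivative_X]
    ring

end PathPolynomials

section PathEigenvector

variable {K : Type*} [Field K] {n : ℕ} {π ν : ℕ → K} {lam : K} {z : ℕ → K}

/-- `z` is an eigenvector of `M^G_{π,ν}` with eigenvalue `lam`, all with values in an arbitrary
field; over `ℝ` this unfolds to the same proposition as `IsEigen`. -/
def IsPathEigenvector (n : ℕ) (π ν : ℕ → K) (lam : K) (z : ℕ → K) : Prop :=
  (∃ k ∈ Icc 1 n, z k ≠ 0) ∧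
  ∀ k ∈ Icc 1 n,
    lam * (π k * z k) = (z k - z (k - 1)) * ν (k - 1) + (z k - z (k + 1)) * ν k

namespace IsPathEigenvector

lemma mul_sum_eq_sub_mul (h : IsPathEigenvector n π ν lam z) (hν0 : ν 0 = 0) {k : ℕ}
    (hk : k ≤ n) : lam * ∑ l ∈ Icc 1 k, π l * z l = (z k - z (k + 1)) * ν k := by
  induction k with
  | zero => simp [hν0]
  | succ k ih =>
    have hvertex := h.2 (k + 1) (mem_Icc.mpr ⟨by lia, hk⟩)
    rw [Nat.add_sub_cancel] at hvertex
    rw [sum_Icc_succ_top (by lia), mul_add, ih (by lia), hvertex]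
    ring

lemma eq_eval_eigenPoly_and_sum_eq_eval_massPoly (h : IsPathEigenvector n π ν lam z)
    (hν0 : ν 0 = 0) (hν : ∀ k ∈ Icc 1 (n - 1), ν k ≠ 0) {k : ℕ} (hk : k ∈ Icc 1 n) :
    z k = z 1 * (eigenPoly π ν⁻¹ k).eval lam ∧
      ∑ l ∈ Icc 1 k, π l * z l = z 1 * (massPoly π ν⁻¹ k).eval lam := by
  obtain ⟨hk1, hkn⟩ := mem_Icc.mp hk
  induction k, hk1 using Nat.le_induction with
  | base => simp [massPoly, mul_comm]
  | succ k hk1 ih =>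
    obtain ⟨hz, hsum⟩ := ih (mem_Icc.mpr ⟨hk1, by lia⟩) (by lia)
    have hνk : ν k ≠ 0 := hν k (mem_Icc.mpr ⟨hk1, by lia⟩)
    have hflow := h.mul_sum_eq_sub_mul hν0 (k := k) (by lia)
    have hz_succ : z (k + 1) = z 1 * (eigenPoly π ν⁻¹ (k + 1)).eval lam := by
      simp only [eigenPoly, eval_sub, eval_mul, eval_C, eval_X, Pi.inv_apply]
      rw [hsum] at hflow
      field_simp
      linear_combination ν k * hz + hflow
    refine ⟨hz_succ, ?_⟩
    rw [sum_Icc_succ_top (by lia), hsum, hz_succ, massPoly, eval_add, eval_C_mul]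
    ring

lemma apply_one_ne_zero (h : IsPathEigenvector n π ν lam z) (hν0 : ν 0 = 0)
    (hν : ∀ k ∈ Icc 1 (n - 1), ν k ≠ 0) : z 1 ≠ 0 := by
  obtain ⟨k, hk, hzk⟩ := h.1
  rw [(h.eq_eval_eigenPoly_and_sum_eq_eval_massPoly hν0 hν hk).1] at hzk
  exact left_ne_zero_of_mul hzk

lemma one_le (h : IsPathEigenvector n π ν lam z) : 1 ≤ n := by
  obtain ⟨k, hk, -⟩ := h.1
  exact (mem_Icc.mp hk).1.trans (mem_Icc.mp hk).2

lemma mul_eval_massPoly_eq_zero (h : IsPathEigenvector n π ν lam z) (hν0 : ν 0 = 0)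
    (hνn : ν n = 0) (hν : ∀ k ∈ Icc 1 (n - 1), ν k ≠ 0) :
    lam * (massPoly π ν⁻¹ n).eval lam = 0 := by
  have hflow := h.mul_sum_eq_sub_mul hν0 le_rfl
  rw [(h.eq_eval_eigenPoly_and_sum_eq_eval_massPoly hν0 hν (right_mem_Icc.mpr h.one_le)).2, hνn,
    mul_zero, mul_left_comm] at hflow
  exact (mul_eq_zero.mp hflow).resolve_left (h.apply_one_ne_zero hν0 hν)

lemma sum_sq_mul_eq (h : IsPathEigenvector n π ν lam z) (hν0 : ν 0 = 0) (hνn : ν n = 0)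
    (hν : ∀ k ∈ Icc 1 (n - 1), ν k ≠ 0) :
    ∑ k ∈ Icc 1 n, z k ^ 2 * π k =
      z 1 * z n * (derivative (X * massPoly π ν⁻¹ n)).eval lam := by
  have hz {k : ℕ} (hk : k ∈ Icc 1 n) : z k = z 1 * (eigenPoly π ν⁻¹ k).eval lam :=
    (h.eq_eval_eigenPoly_and_sum_eq_eval_massPoly hν0 hν hk).1
  have hroot : (X * massPoly π ν⁻¹ n).eval lam = 0 := by
    rw [eval_mul, eval_X, h.mul_eval_massPoly_eq_zero hν0 hνn hν]
  calc ∑ k ∈ Icc 1 n, z k ^ 2 * π k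
      = ∑ k ∈ Icc 1 n, z 1 ^ 2 * (C (π k) * eigenPoly π ν⁻¹ k ^ 2).eval lam :=
        sum_congr rfl fun k hk ↦ by rw [hz hk, eval_C_mul, eval_pow]; ring
    _ = z 1 ^ 2 * (wronskian (eigenPoly π ν⁻¹ n) (X * massPoly π ν⁻¹ n)).eval lam := by
        rw [wronskian_eigenPoly_X_mul_massPoly, eval_finsetSum, mul_sum]
    _ = z 1 * z n * (derivative (X * massPoly π ν⁻¹ n)).eval lam := by
        rw [wronskian, eval_sub, eval_mul, eval_mul, hroot, hz (right_mem_Icc.mpr h.one_le)]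
        ring

end IsPathEigenvector

end PathEigenvector

theorem stmt12_general {K ι : Type*} [Field K] [DecidableEq ι] {n : ℕ} {π ν : ℕ → K}
    (hν0 : ν 0 = 0) (hνn : ν n = 0) (hν : ∀ k ∈ Icc 1 (n - 1), ν k ≠ 0)
    {s : Finset ι} (hs : #s = n - 1) {lam : ι → K}
    (hinj : Set.InjOn lam s) (hlam : ∀ j ∈ s, lam j ≠ 0) {ζ : ι → ℕ → K}
    (hζ : ∀ j ∈ s, IsPathEigenvector n π ν (lam j) (ζ j)) {i : ι} (hi : i ∈ s) :
    ζ i 1 * ζ i n * ∑ k ∈ Icc 1 n, π k =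
      -((∑ k ∈ Icc 1 n, ζ i k ^ 2 * π k) * ∏ j ∈ s.erase i, lam j / (lam j - lam i)) := by
  have hroot (j : ι) (hj : j ∈ s) : (massPoly π ν⁻¹ n).eval (lam j) = 0 :=
    (mul_eq_zero.mp ((hζ j hj).mul_eval_massPoly_eq_zero hν0 hνn hν)).resolve_left (hlam j hj)
  have hdeg : (massPoly π ν⁻¹ n).natDegree ≤ #s :=
    hs ▸ (natDegree_eigenPoly_le_and_natDegree_massPoly_le π ν⁻¹ n).2
  have hnorm : ∑ k ∈ Icc 1 n, ζ i k ^ 2 * π k =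
      ζ i 1 * ζ i n * (lam i * (derivative (massPoly π ν⁻¹ n)).eval (lam i)) := by
    rw [(hζ i hi).sum_sq_mul_eq hν0 hνn hν, derivative_mul, derivative_X, one_mul, eval_add,
      eval_mul, eval_X, hroot i hi, zero_add]
  have hmass : ∑ k ∈ Icc 1 n, π k = (derivative (massPoly π ν⁻¹ n)).eval (lam i) * -lam i *
      ∏ j ∈ s.erase i, lam j / (lam j - lam i) := by
    rw [← eval_zero_massPoly π ν⁻¹, eval_eq_eval_derivative_mul_prod_div hinj hdeg hroot hi 0,
      zero_sub]
    congr 1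
    exact prod_congr rfl fun j _ ↦ by rw [zero_sub, ← neg_sub, neg_div_neg_eq]
  rw [hnorm, hmass]
  ring

theorem stmt12 (n : ℕ) (hn : 2 ≤ n) (π ν : ℕ → ℝ)
    (hπ : ∀ k ∈ Finset.Icc 1 n, 0 < π k)
    (hπ1 : ∑ k ∈ Finset.Icc 1 n, π k = 1)
    (hν : ∀ k ∈ Finset.Icc 1 (n - 1), 0 < ν k)
    (hν0 : ν 0 = 0) (hνn : ν n = 0)
    -- the (simple) eigenvalues `0 = λ^G_0 < λ^G_1 < ⋯ < λ^G_{n−1}` of `M^G_{π,ν}`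
    (lamG : ℕ → ℝ) (hlamG0 : lamG 0 = 0)
    (hlamGmono : ∀ j, j + 1 ≤ n - 1 → lamG j < lamG (j + 1))
    (hlamGall : ∀ (μ : ℝ) (ζ : ℕ → ℝ), IsEigen n π ν μ ζ → ∃ j ≤ n - 1, μ = lamG j)
    -- the `L²(π)`-normalized eigenvectors `ζ_0 = 1, ζ_1, …, ζ_{n−1}`
    (ζ : ℕ → ℕ → ℝ)
    (hζ0 : ∀ k ∈ Finset.Icc 1 n, ζ 0 k = 1)
    (hζeig : ∀ j, 1 ≤ j → j ≤ n - 1 → IsEigen n π ν (lamG j) (ζ j))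
    (hζnorm : ∀ j, j ≤ n - 1 → ∑ k ∈ Finset.Icc 1 n, (ζ j k) ^ 2 * π k = 1) :
    ∀ i, 1 ≤ i → i ≤ n - 1 →
      ζ i 1 * ζ i n =
        -∏ j ∈ (Finset.Icc 1 (n - 1)).erase i, lamG j / (lamG j - lamG i) := by
  intro i hi1 hin
  have hmono : StrictMonoOn lamG (Set.Iic (n - 1)) := strictMonoOn_Iic_of_lt_succ hlamGmono
  have hne (j : ℕ) (hj : j ∈ Icc 1 (n - 1)) : lamG j ≠ 0 :=
    (hlamG0 ▸ hmono (Nat.zero_le _) (mem_Icc.mp hj).2 (mem_Icc.mp hj).1 : 0 < lamG j).ne'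
  have h := stmt12_general hν0 hνn (fun k hk ↦ (hν k hk).ne') (Nat.card_Icc 1 (n - 1))
    (hmono.injOn.mono fun j hj ↦ (mem_Icc.mp hj).2) hne
    (fun j hj ↦ hζeig j (mem_Icc.mp hj).1 (mem_Icc.mp hj).2) (mem_Icc.mpr ⟨hi1, hin⟩)
  rwa [hπ1, hζnorm i hin, mul_one, one_mul] at h
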